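/- Let 0 < ε < 1/11, let q ≥ 1 be an integer, set n = q², and let S ⊆ {1,…,n} with |S| = q. Define c ∈ ℝ^{n+1} by c_{n+1} = 1, c_i = 1/(2εq) for i ∈ S, and c_i = 0 for i ∉ S with i ≤ n. Then c·x^S = 1/(2ε) + 11/20, and consequently (1−ε)·(c·x^S) > max{c·x : x ∈ P(n+1,ε)} = 1/(2ε). -/

import Mathlib

noncomputable section

/-- Dot product on `ℝ^d`. -/
def dot {d : ℕ} (c x : Fin d → ℝ) : ℝ := ∑ i, c i * x i

/-- The feasible 0/1 points of the knapsack instance defining `P(n+1, ε)` with `n = q²`. -/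
def knapVert (q : ℕ) (ε : ℝ) : Set (Fin (q ^ 2 + 1) → ℝ) :=
  {x | (∀ i, x i = 0 ∨ x i = 1) ∧
    (∑ i : Fin (q ^ 2), x i.castSucc / (2 * ε * q)) + (q ^ 2 : ℝ) * x (Fin.last (q ^ 2))
      ≤ (q ^ 2 : ℝ) + 1 / (2 * ε) - 1}

/-- The knapsack polytope `P(n+1, ε)` with `n = q²`. -/
def knapP (q : ℕ) (ε : ℝ) : Set (Fin (q ^ 2 + 1) → ℝ) := convexHull ℝ (knapVert q ε)

/-- The objective `c ∈ ℝ^{n+1}` (with `n = q²`) given by `c_{n+1} = 1`,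
`c_i = 1/(2εq)` for `i ∈ S`, and `c_i = 0` for the remaining `i ≤ n`. -/
def cvec (q : ℕ) (ε : ℝ) (S : Finset (Fin (q ^ 2))) : Fin (q ^ 2 + 1) → ℝ :=
  fun j => if h : (j : ℕ) < q ^ 2 then
    (if (⟨j, h⟩ : Fin (q ^ 2)) ∈ S then 1 / (2 * ε * q) else 0)
  else 1

/-- The point `x^S ∈ ℝ^{n+1}` (with `n = q²`) given by `x^S_{n+1} = 4/5`,
`x^S_i = 1 − ε/2` for `i ∈ S`, and `x^S_i = 0` otherwise. -/
def xptS (q : ℕ) (ε : ℝ) (S : Finset (Fin (q ^ 2))) : Fin (q ^ 2 + 1) → ℝ :=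
  fun j => if h : (j : ℕ) < q ^ 2 then
    (if (⟨j, h⟩ : Fin (q ^ 2)) ∈ S then 1 - ε / 2 else 0)
  else 4 / 5

theorem dot_cvec (q : ℕ) (ε : ℝ) (S : Finset (Fin (q ^ 2))) (x : Fin (q ^ 2 + 1) → ℝ) :
    dot (cvec q ε S) x
      = (∑ i ∈ S, x i.castSucc / (2 * ε * q)) + x (Fin.last (q ^ 2)) := by
  unfold dot
  rw [Fin.sum_univ_castSucc]
  congr 1
  · rw [← Finset.sum_subset (Finset.subset_univ S)]
    · apply Finset.sum_congr rfl
      intro i hi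
      simp [cvec, hi]
      ring
    · intro i _ hi
      simp [cvec, hi]
  · simp [cvec]

/-- for `0 < ε < 1/11`, `q ≥ 1`, `n = q²` and `S ⊆ [n]` with `|S| = q`, one has
`c·x^S = 1/(2ε) + 11/20`, the maximum of `c` over `P(n+1, ε)` equals `1/(2ε)`, and hence
`(1−ε)·(c·x^S) > max {c·x : x ∈ P(n+1, ε)}`, where `c = cvec q ε S`. -/
theorem knapsack_point_beats_polytope (ε : ℝ) (hε0 : 0 < ε) (hε1 : ε < 1 / 11)
    (q : ℕ) (hq : 1 ≤ q) (S : Finset (Fin (q ^ 2))) (hS : S.card = q) :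
    dot (cvec q ε S) (xptS q ε S) = 1 / (2 * ε) + 11 / 20 ∧
    IsGreatest ((fun x => dot (cvec q ε S) x) '' knapP q ε) (1 / (2 * ε)) ∧
    1 / (2 * ε) < (1 - ε) * dot (cvec q ε S) (xptS q ε S) := by
  have hq1 : (1 : ℝ) ≤ q := by exact_mod_cast hq
  have hq0 : (0 : ℝ) < q := by linarith
  have hd : 0 < 2 * ε * q := by positivity
  have h1 : dot (cvec q ε S) (xptS q ε S) = 1 / (2 * ε) + 11 / 20 := by
    rw [dot_cvec]
    have : ∑ i ∈ S, xptS q ε S i.castSucc / (2 * ε * q)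
        = ∑ i ∈ S, (1 - ε / 2) / (2 * ε * q) := by
      apply Finset.sum_congr rfl
      intro i hi
      simp [xptS, hi]
    rw [this, Finset.sum_const, hS, nsmul_eq_mul]
    have h2 : xptS q ε S (Fin.last (q ^ 2)) = 4 / 5 := by simp [xptS]
    rw [h2]
    field_simp
    ring
  have hsum : ∑ _i ∈ S, (1 / (2 * ε * q)) = 1 / (2 * ε) := by
    rw [Finset.sum_const, hS, nsmul_eq_mul]
    field_simp
  refine ⟨h1, ⟨?_, ?_⟩, ?_⟩
  · let y : Fin (q ^ 2 + 1) → ℝ := fun j => if h : (j : ℕ) < q ^ 2 then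
      (if (⟨j, h⟩ : Fin (q ^ 2)) ∈ S then 1 else 0) else 0
    have hyc : ∀ i : Fin (q ^ 2), y i.castSucc = if i ∈ S then 1 else 0 := by
      intro i
      simp [y]
    have hyl : y (Fin.last (q ^ 2)) = 0 := by simp [y]
    have hyS : ∑ i ∈ S, y i.castSucc / (2 * ε * q) = 1 / (2 * ε) := by
      rw [← hsum]
      apply Finset.sum_congr rfl
      intro i hi
      simp [hyc, hi]
    refine ⟨y, subset_convexHull ℝ _ ⟨?_, ?_⟩, ?_⟩
    · intro i
      simp only [y]
      split_ifs <;> simp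
    · rw [← Finset.sum_subset (Finset.subset_univ S), hyS, hyl]
      · nlinarith
      · intro i _ hi
        simp [hyc, hi]
    · change dot _ y = _
      rw [dot_cvec, hyS, hyl, add_zero]
  · rintro _ ⟨x, hx, rfl⟩
    have hconv : Convex ℝ {x : Fin (q ^ 2 + 1) → ℝ | dot (cvec q ε S) x ≤ 1 / (2 * ε)} := by
      apply convex_halfSpace_le
      constructor
      · intro a b
        simp [dot, mul_add, Finset.sum_add_distrib]
      · intro r a
        simp only [dot, Pi.smul_apply, smul_eq_mul, Finset.mul_sum]
        exact Finset.sum_congr rfl fun i _ => by ring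
    refine convexHull_min ?_ hconv hx
    rintro x ⟨h01, hw⟩
    change dot _ x ≤ _
    rw [dot_cvec]
    rcases h01 (Fin.last (q ^ 2)) with hl | hl
    · rw [hl, add_zero, ← hsum]
      apply Finset.sum_le_sum
      intro i _
      rcases h01 i.castSucc with h | h <;> rw [h]
      · rw [zero_div]
        positivity
    · have hle : ∑ i ∈ S, x i.castSucc / (2 * ε * q)
          ≤ ∑ i : Fin (q ^ 2), x i.castSucc / (2 * ε * q) := by
        apply Finset.sum_le_sum_of_subset_of_nonneg (Finset.subset_univ S)
        intro i _ _
        rcases h01 i.castSucc with h | h <;> rw [h] <;> positivity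
      rw [hl] at hw ⊢
      linarith
  · rw [h1]
    have h2 : ε * (1 / (2 * ε)) = 1 / 2 := by field_simp
    nlinarith
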